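/- Assume N ≥ 2, 0 < α < N and p > (N+α)/N, and let {u_n} ⊂ E_λ be a (PS)_c sequence for J_λ. Then, after passing to a subsequence, there exists u ∈ E_λ such that u_n → u pointwise on G and u is a critical point of J_λ: (J'_λ(u), v) = 0 for every v ∈ E_λ. -/

import Mathlib

open scoped BigOperators ENNReal
open Filter

noncomputable section

namespace Choquard

variable {G : Type*}

/-- The word metric on a group with generating set `S`. -/
def wordDist [Group G] (S : Finset G) (x y : G) : ℕ :=
  sInf {k : ℕ | ∃ l : List G, (∀ g ∈ l, g ∈ S) ∧ l.length = k ∧ x⁻¹ * y = l.prod}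

/-- The closed ball of radius `r` about `c` in the word metric. -/
def ball [Group G] (S : Finset G) (c : G) (r : ℝ) : Set G :=
  {x | (wordDist S x c : ℝ) ≤ r}

/-- Polynomial growth of homogeneous dimension `N`. -/
def PolyGrowth [Group G] (S : Finset G) (N : ℕ) : Prop :=
  ∃ C₁ C₂ : ℝ, 0 < C₁ ∧ 0 < C₂ ∧ ∀ r : ℝ, 1 ≤ r →
    C₁ * r ^ N ≤ ((ball S (1 : G) r).ncard : ℝ) ∧
    ((ball S (1 : G) r).ncard : ℝ) ≤ C₂ * r ^ N

/-- Riesz-type asymptotics for the kernel `R`. -/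
def RieszKernel [Group G] (S : Finset G) (N : ℕ) (α : ℝ) (R : G → G → ℝ) : Prop :=
  (∀ x y, 0 < R x y) ∧
  ∃ c₁ c₂ : ℝ, 0 < c₁ ∧ 0 < c₂ ∧ ∀ x y : G, x ≠ y →
    c₁ * (wordDist S x y : ℝ) ^ (α - (N : ℝ)) ≤ R x y ∧
    R x y ≤ c₂ * (wordDist S x y : ℝ) ^ (α - (N : ℝ))

/-- Convolution `(R ∗ f)(x) = Σ_{y ≠ x} R x y f y`. -/
def conv [DecidableEq G] (R : G → G → ℝ) (f : G → ℝ) (x : G) : ℝ :=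
  ∑' y, if y = x then 0 else R x y * f y

/-- The convolution as an extended-nonnegative-real valued sum. -/
def convE [DecidableEq G] (R : G → G → ℝ) (f : G → ℝ) (x : G) : ℝ≥0∞ :=
  ∑' y, if y = x then 0 else ENNReal.ofReal (R x y * f y)

/-- Membership in `ℓ^q(G)`. -/
def Memlp (q : ℝ) (u : G → ℝ) : Prop := Summable fun x => |u x| ^ q

/-- The `ℓ^q` norm. -/
def lpNorm (q : ℝ) (u : G → ℝ) : ℝ := (∑' x, |u x| ^ q) ^ (1 / q)

/-- The `ℓ^∞` norm. -/
def supNorm (u : G → ℝ) : ℝ := ⨆ x, |u x|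

/-- The graph Laplacian `Δu(x) = Σ_{s ∈ S} (u(xs) - u(x))`. -/
def lap [Group G] (S : Finset G) (u : G → ℝ) (x : G) : ℝ :=
  ∑ s ∈ S, (u (x * s) - u x)

/-- The gradient form `∇u∇v(x) = (1/2) Σ_{s ∈ S} (u(xs)-u(x))(v(xs)-v(x))`. -/
def grad [Group G] (S : Finset G) (u v : G → ℝ) (x : G) : ℝ :=
  (1 / 2) * ∑ s ∈ S, (u (x * s) - u x) * (v (x * s) - v x)

/-- The density `|Δu|² + |∇u|² + (1 + λa)u²`. -/
def eDensity [Group G] (S : Finset G) (a : G → ℝ) (lam : ℝ) (u : G → ℝ) (x : G) : ℝ :=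
  (lap S u x) ^ 2 + grad S u u x + (1 + lam * a x) * (u x) ^ 2

/-- Membership in the space `E_λ`. -/
def MemE [Group G] (S : Finset G) (a : G → ℝ) (lam : ℝ) (u : G → ℝ) : Prop :=
  Summable (eDensity S a lam u)

/-- `‖u‖²_{E_λ}`. -/
def normEsq [Group G] (S : Finset G) (a : G → ℝ) (lam : ℝ) (u : G → ℝ) : ℝ :=
  ∑' x, eDensity S a lam u x

/-- `‖u‖_{E_λ}`. -/
def normE [Group G] (S : Finset G) (a : G → ℝ) (lam : ℝ) (u : G → ℝ) : ℝ :=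
  Real.sqrt (normEsq S a lam u)

/-- The inner product `⟨u, v⟩_{E_λ}`. -/
def innerE [Group G] (S : Finset G) (a : G → ℝ) (lam : ℝ) (u v : G → ℝ) : ℝ :=
  ∑' x, (lap S u x * lap S v x + grad S u v x + (1 + lam * a x) * (u x * v x))

/-- The nonlocal term `Σ_G (R_α ∗ |u|^p)|u|^p`. -/
def Dterm [DecidableEq G] (R : G → G → ℝ) (p : ℝ) (u : G → ℝ) : ℝ :=
  ∑' x, conv R (fun y => |u y| ^ p) x * |u x| ^ p

/-- The nonlocal pairing `Σ_G (R_α ∗ |u|^p)|u|^{p-2} u v`. -/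
def Kterm [DecidableEq G] (R : G → G → ℝ) (p : ℝ) (u v : G → ℝ) : ℝ :=
  ∑' x, conv R (fun y => |u y| ^ p) x * (|u x| ^ (p - 2) * u x * v x)

/-- The energy functional `J_λ`. -/
def Jfun [Group G] [DecidableEq G] (S : Finset G) (a : G → ℝ) (lam : ℝ)
    (R : G → G → ℝ) (p : ℝ) (u : G → ℝ) : ℝ :=
  (1 / 2) * normEsq S a lam u - (1 / (2 * p)) * Dterm R p u

/-- The derivative pairing `(J'_λ(u), v)`. -/
def Jd [Group G] [DecidableEq G] (S : Finset G) (a : G → ℝ) (lam : ℝ)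
    (R : G → G → ℝ) (p : ℝ) (u v : G → ℝ) : ℝ :=
  innerE S a lam u v - Kterm R p u v

/-- The Nehari manifold `N_λ`. -/
def nehari [Group G] [DecidableEq G] (S : Finset G) (a : G → ℝ) (lam : ℝ)
    (R : G → G → ℝ) (p : ℝ) : Set (G → ℝ) :=
  {u | MemE S a lam u ∧ u ≠ 0 ∧ Jd S a lam R p u u = 0}

/-- `m_λ = inf_{N_λ} J_λ`. -/
def mlam [Group G] [DecidableEq G] (S : Finset G) (a : G → ℝ) (lam : ℝ)
    (R : G → G → ℝ) (p : ℝ) : ℝ :=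
  sInf (Jfun S a lam R p '' nehari S a lam R p)

/-- The norm of `J'_λ(u)` in the dual space `E_λ*`. -/
def dualNorm [Group G] [DecidableEq G] (S : Finset G) (a : G → ℝ) (lam : ℝ)
    (R : G → G → ℝ) (p : ℝ) (u : G → ℝ) : ℝ :=
  sSup {t : ℝ | ∃ v, MemE S a lam v ∧ normEsq S a lam v ≤ 1 ∧ t = |Jd S a lam R p u v|}

/-- `(PS)_c` sequence for `J_λ`. -/
def PSseq [Group G] [DecidableEq G] (S : Finset G) (a : G → ℝ) (lam : ℝ)
    (R : G → G → ℝ) (p : ℝ) (c : ℝ) (U : ℕ → G → ℝ) : Prop :=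
  (∀ n, MemE S a lam (U n)) ∧
  Tendsto (fun n => Jfun S a lam R p (U n)) atTop (nhds c) ∧
  Tendsto (fun n => dualNorm S a lam R p (U n)) atTop (nhds 0)

/-- The Cayley graph of `(G, S)`. -/
def cayley [Group G] (S : Finset G) : SimpleGraph G :=
  SimpleGraph.fromRel (fun x y => x⁻¹ * y ∈ S)

/-- Condition (A₁): the potential well `Ω = {a = 0}` is nonempty, finite and connected. -/
def CondA1 [Group G] (S : Finset G) (a : G → ℝ) : Prop :=
  {x | a x = 0}.Nonempty ∧ {x | a x = 0}.Finite ∧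
  ((cayley S).induce {x | a x = 0}).Connected

/-- Condition (A₂): some sublevel set `{a ≤ M}` is finite and nonempty. -/
def CondA2 (a : G → ℝ) : Prop :=
  ∃ M : ℝ, 0 < M ∧ {x | a x ≤ M}.Finite ∧ {x | a x ≤ M}.Nonempty

/-- The density `|Δu|² + |∇u|² + u²` of the `W^{2,2}` norm. -/
def wDensity [Group G] (S : Finset G) (u : G → ℝ) (x : G) : ℝ :=
  (lap S u x) ^ 2 + grad S u u x + (u x) ^ 2

/-- Membership in `W^{2,2}(G)`. -/
def MemW [Group G] (S : Finset G) (u : G → ℝ) : Prop := Summable (wDensity S u)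

/-- `‖u‖²_{W^{2,2}}`. -/
def normWsq [Group G] (S : Finset G) (u : G → ℝ) : ℝ := ∑' x, wDensity S u x

/-- Membership in `E(Ω)`: vanishing outside `Ω`. -/
def MemEOm (Ω : Set G) (u : G → ℝ) : Prop := ∀ x ∉ Ω, u x = 0

/-- `‖u‖²_{E(Ω)}`. -/
def normOmSq [Group G] (S : Finset G) (Ω : Set G) (u : G → ℝ) : ℝ :=
  (∑' x, ((lap S u x) ^ 2 + grad S u u x)) + ∑' x : Ω, (u (x : G)) ^ 2

/-- The nonlocal term over `Ω`. -/
def DtermOm [DecidableEq G] (Ω : Set G) (R : G → G → ℝ) (p : ℝ) (u : G → ℝ) : ℝ :=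
  ∑' x : Ω, conv R (fun y => |u y| ^ p) (x : G) * |u (x : G)| ^ p

/-- The limiting energy functional `J_Ω`. -/
def JOm [Group G] [DecidableEq G] (S : Finset G) (Ω : Set G) (R : G → G → ℝ) (p : ℝ)
    (u : G → ℝ) : ℝ :=
  (1 / 2) * normOmSq S Ω u - (1 / (2 * p)) * DtermOm Ω R p u

/-- The derivative pairing `(J'_Ω(u), v)`. -/
def JdOm [Group G] [DecidableEq G] (S : Finset G) (Ω : Set G) (R : G → G → ℝ) (p : ℝ)
    (u v : G → ℝ) : ℝ :=
  (∑' x, (lap S u x * lap S v x + grad S u v x)) + (∑' x : Ω, u (x : G) * v (x : G))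
    - ∑' x : Ω, conv R (fun y => |u y| ^ p) (x : G) * (|u (x : G)| ^ (p - 2) * u (x : G) * v (x : G))

/-- The Nehari manifold `N_Ω`. -/
def nehariOm [Group G] [DecidableEq G] (S : Finset G) (Ω : Set G) (R : G → G → ℝ)
    (p : ℝ) : Set (G → ℝ) :=
  {u | MemEOm Ω u ∧ u ≠ 0 ∧ JdOm S Ω R p u u = 0}

/-- `m_Ω = inf_{N_Ω} J_Ω`. -/
def mOm [Group G] [DecidableEq G] (S : Finset G) (Ω : Set G) (R : G → G → ℝ) (p : ℝ) : ℝ :=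
  sInf (JOm S Ω R p '' nehariOm S Ω R p)

section helpers

lemma ball_finite [Group G] {S : Finset G} {N : ℕ} (h : PolyGrowth S N) (r : ℝ) (hr : 1 ≤ r) :
    (ball S (1 : G) r).Finite := by
  obtain ⟨C₁, C₂, h1, h2, h⟩ := h
  apply Set.finite_of_ncard_pos
  have := (h r hr).1
  have h3 : 0 < C₁ * r ^ N := by positivity
  exact_mod_cast lt_of_lt_of_le h3 this

lemma summable_word [Group G] {S : Finset G} {N : ℕ} (h : PolyGrowth S N) (β : ℝ)
    (hβ : (N : ℝ) < β) : Summable fun g : G => (wordDist S g 1 : ℝ) ^ (-β) := by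
  classical
  have hfin := ball_finite h
  obtain ⟨C₁, C₂, h1, h2, h⟩ := h
  have hβ0 : 0 < β := lt_of_le_of_lt (Nat.cast_nonneg N) hβ
  let F : ℕ × G → ℝ := fun z =>
    if z.2 ∈ ball S (1 : G) ((2 : ℝ) ^ (z.1 + 1)) then ((2 : ℝ) ^ z.1) ^ (-β) else 0
  have hF0 : 0 ≤ F := by
    intro z
    simp only [F]
    split_ifs
    · exact Real.rpow_nonneg (by positivity) _
    · exact le_rfl
  have hr : ∀ m : ℕ, (1 : ℝ) ≤ 2 ^ (m + 1) := fun m => one_le_pow₀ (by norm_num)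
  have hsupp : ∀ m : ℕ, ∀ g ∉ (hfin _ (hr m)).toFinset, F (m, g) = 0 := by
    intro m g hg
    simp only [Set.Finite.mem_toFinset] at hg
    simp [F, hg]
  have hFs : Summable F := by
    rw [summable_prod_of_nonneg hF0]
    refine ⟨fun m => summable_of_ne_finset_zero (hsupp m), ?_⟩
    have hq1 : (2 : ℝ) ^ ((N : ℝ) - β) < 1 :=
      Real.rpow_lt_one_of_one_lt_of_neg (by norm_num) (by linarith)
    have hg := (summable_geometric_of_lt_one (by positivity) hq1).mul_left (C₂ * 2 ^ N)
    refine Summable.of_nonneg_of_le (fun m => tsum_nonneg fun g => hF0 _) (fun m => ?_) hg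
    rw [tsum_eq_sum (hsupp m)]
    have : ∑ g ∈ (hfin _ (hr m)).toFinset, F (m, g)
        = ∑ g ∈ (hfin _ (hr m)).toFinset, ((2 : ℝ) ^ m) ^ (-β) := by
      refine Finset.sum_congr rfl fun g hg => ?_
      simp only [Set.Finite.mem_toFinset] at hg
      simp [F, hg]
    rw [this, Finset.sum_const, nsmul_eq_mul, ← Set.ncard_eq_toFinset_card _ (hfin _ (hr m))]
    have h3 := (h _ (hr m)).2
    calc _ ≤ C₂ * ((2 : ℝ) ^ (m + 1)) ^ N * ((2 : ℝ) ^ m) ^ (-β) := by gcongr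
      _ = C₂ * 2 ^ N * ((2 : ℝ) ^ ((N : ℝ) - β)) ^ m := by
        rw [← Real.rpow_natCast (2 ^ ((N : ℝ) - β)) m, ← Real.rpow_mul (by norm_num),
          ← Real.rpow_natCast 2 m, ← Real.rpow_mul (by norm_num)]
        rw [pow_succ, mul_pow, ← pow_mul, ← Real.rpow_natCast 2 (m * N)]
        rw [sub_mul, Real.rpow_sub (by norm_num), mul_neg, Real.rpow_neg (by norm_num)]
        push_cast
        rw [mul_comm (m : ℝ) N, mul_comm (m : ℝ) β]
        ring
  have hs := hFs.prod_symm.prod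
  refine Summable.of_nonneg_of_le (fun g => Real.rpow_nonneg (Nat.cast_nonneg _) _) (fun g => ?_) hs
  have hsg := hFs.prod_symm.prod_factor g
  by_cases h0 : wordDist S g 1 = 0
  · rw [h0, Nat.cast_zero, Real.zero_rpow (by linarith)]
    exact tsum_nonneg fun m => hF0 _
  · refine le_trans ?_ (hsg.le_tsum (Nat.log 2 (wordDist S g 1)) (fun m _ => hF0 _))
    have hlt := Nat.lt_pow_succ_log_self (b := 2) (by norm_num) (wordDist S g 1)
    have hle := Nat.pow_log_le_self 2 h0
    have hmem : g ∈ ball S (1 : G) ((2 : ℝ) ^ (Nat.log 2 (wordDist S g 1) + 1)) := by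
      show (wordDist S g 1 : ℝ) ≤ _
      exact_mod_cast hlt.le
    simp only [Prod.swap, F, hmem, if_true]
    apply Real.rpow_le_rpow_of_nonpos (by positivity) _ (by linarith)
    exact_mod_cast hle

/-- off-diagonal kernel -/
def ker [DecidableEq G] (R : G → G → ℝ) (x y : G) : ℝ := if y = x then 0 else R x y

lemma conv_eq [DecidableEq G] (R : G → G → ℝ) (f : G → ℝ) (x : G) :
    conv R f x = ∑' y, ker R x y * f y := by
  unfold conv ker
  congr 1; ext y; split_ifs <;> simp

lemma wordDist_shift [Group G] (S : Finset G) (x y : G) :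
    wordDist S x y = wordDist S (y⁻¹ * x) 1 := by
  unfold wordDist; simp

lemma ker_nonneg [Group G] [DecidableEq G] {S : Finset G} {N : ℕ} {α : ℝ} {R : G → G → ℝ}
    (hR : RieszKernel S N α R) (x y : G) : 0 ≤ ker R x y := by
  unfold ker; split_ifs
  · exact le_rfl
  · exact (hR.1 x y).le

lemma ker_bound [Group G] [DecidableEq G] {S : Finset G} {N : ℕ} {α : ℝ} {R : G → G → ℝ}
    (h : PolyGrowth S N) (hR : RieszKernel S N α R) (s : ℝ) (hs0 : 0 < s)
    (hs : (N : ℝ) < (N - α) * s) :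
    ∃ z : G → ℝ, Summable z ∧ (∀ g, 0 ≤ z g) ∧ ∀ x y, ker R x y ^ s ≤ z (y⁻¹ * x) := by
  have hsum := summable_word h _ hs
  obtain ⟨c₁, c₂, h1, h2, hb⟩ := hR.2
  refine ⟨_, hsum.mul_left (c₂ ^ s), fun g => by positivity, fun x y => ?_⟩
  unfold ker
  split_ifs with hxy
  · rw [Real.zero_rpow hs0.ne']; positivity
  · have := (hb x y (Ne.symm hxy)).2
    rw [wordDist_shift] at this
    calc R x y ^ s ≤ (c₂ * (wordDist S (y⁻¹ * x) 1 : ℝ) ^ (α - N)) ^ s :=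
          Real.rpow_le_rpow (hR.1 x y).le this hs0.le
      _ = _ := by
        rw [Real.mul_rpow h2.le (by positivity), ← Real.rpow_mul (by positivity)]
        congr 2; ring

/-- pointwise three-term inequality -/
lemma three_term {q k a b : ℝ} (hq1 : 1 < q) (hq2 : q < 2) (hk : 0 ≤ k) (ha : 0 ≤ a) (hb : 0 ≤ b) :
    k * (a ^ q * b ^ q) ≤ k ^ (1 / (2 - q)) * a ^ 2 + k ^ (1 / (2 - q)) * b ^ 2 + a ^ 2 * b ^ 2 := by
  have hA : 0 ≤ (2 - q) / 2 := by linarith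
  have hB : 0 ≤ q - 1 := by linarith
  have hk' : 0 ≤ k ^ (1 / (2 - q)) := by positivity
  have := Real.geom_mean_le_arith_mean3_weighted hA hA hB
    (p₁ := k ^ (1 / (2 - q)) * a ^ 2) (p₂ := k ^ (1 / (2 - q)) * b ^ 2) (p₃ := a ^ 2 * b ^ 2)
    (by positivity) (by positivity) (by positivity) (by ring)
  have e : k * (a ^ q * b ^ q) = (k ^ (1 / (2 - q)) * a ^ 2) ^ ((2 - q) / 2) *
      (k ^ (1 / (2 - q)) * b ^ 2) ^ ((2 - q) / 2) * (a ^ 2 * b ^ 2) ^ (q - 1) := by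
    have hpow : ∀ t : ℝ, 0 ≤ t → t ^ q = (t ^ 2) ^ ((2 - q) / 2) * (t ^ 2) ^ (q - 1) := by
      intro t ht
      rw [← Real.rpow_natCast t 2, ← Real.rpow_mul ht, ← Real.rpow_mul ht,
        ← Real.rpow_add_of_nonneg ht (by push_cast; linarith) (by push_cast; linarith)]
      congr 1; push_cast; ring
    have hkk : k = (k ^ (1 / (2 - q))) ^ ((2 - q) / 2) * (k ^ (1 / (2 - q))) ^ ((2 - q) / 2) := by
      rw [← Real.rpow_add_of_nonneg hk' hA hA, ← Real.rpow_mul hk]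
      have : 1 / (2 - q) * ((2 - q) / 2 + (2 - q) / 2) = 1 := by
        have : 2 - q ≠ 0 := by linarith
        field_simp; ring
      rw [this, Real.rpow_one]
    rw [Real.mul_rpow hk' (by positivity), Real.mul_rpow hk' (by positivity),
      Real.mul_rpow (by positivity) (by positivity), hpow a ha, hpow b hb]
    nth_rewrite 1 [hkk]
    ring
  rw [e]
  refine this.trans (add_le_add (add_le_add ?_ ?_) ?_)
  · exact mul_le_of_le_one_left (by positivity) (by linarith)
  · exact mul_le_of_le_one_left (by positivity) (by linarith)
  · exact mul_le_of_le_one_left (by positivity) (by linarith)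

/-- two-term inequality with epsilon -/
lemma two_term {q ε : ℝ} (hq1 : 1 < q) (hq2 : q < 2) (hε : 0 < ε) :
    ∃ C : ℝ, 0 ≤ C ∧ ∀ k t : ℝ, 0 ≤ k → 0 ≤ t →
      k * t ^ q ≤ ε * t ^ 2 + C * k ^ (2 / (2 - q)) := by
  have h2q : 0 < 2 - q := by linarith
  have hconj : (2 / q).HolderConjugate (2 / (2 - q)) := by
    rw [Real.holderConjugate_iff]
    constructor
    · rw [lt_div_iff₀ (by linarith)]; linarith
    · field_simp; ring
  refine ⟨(ε ^ (-(q / 2))) ^ (2 / (2 - q)), by positivity, fun k t hk ht => ?_⟩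
  have := Real.young_inequality_of_nonneg (a := ε ^ (q / 2) * t ^ q) (b := ε ^ (-(q / 2)) * k)
    (by positivity) (by positivity) hconj
  have e1 : ε ^ (q / 2) * t ^ q * (ε ^ (-(q / 2)) * k) = k * t ^ q := by
    rw [Real.rpow_neg hε.le]
    have : ε ^ (q / 2) ≠ 0 := by positivity
    field_simp
  have e2 : (ε ^ (q / 2) * t ^ q) ^ (2 / q) = ε * t ^ 2 := by
    rw [Real.mul_rpow (by positivity) (by positivity), ← Real.rpow_mul hε.le, ← Real.rpow_mul ht]
    have h1 : q / 2 * (2 / q) = 1 := by field_simp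
    have h2 : q * (2 / q) = (2 : ℕ) := by field_simp; norm_num
    rw [h1, h2, Real.rpow_one, Real.rpow_natCast]
  rw [e1, e2, Real.mul_rpow (by positivity) hk] at this
  refine this.trans ?_
  gcongr
  · exact div_le_self (by positivity) (by rw [le_div_iff₀ (by linarith)]; linarith)
  · exact div_le_self (by positivity) (by rw [le_div_iff₀ (by linarith)]; linarith)

lemma pow_le {p q t M : ℝ} (hq : 0 < q) (hqp : q ≤ p) (ht : 0 ≤ t) (htM : t ≤ M) :
    t ^ p ≤ M ^ (p - q) * t ^ q := by
  have : t ^ p = t ^ (p - q) * t ^ q := by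
    rw [← Real.rpow_add_of_nonneg ht (by linarith) hq.le]; congr 1; ring
  rw [this]
  gcongr


set_option maxHeartbeats 1000000 in
lemma double_sum [Group G] {k : G → G → ℝ} (hk : ∀ x y, 0 ≤ k x y) {q : ℝ} (hq1 : 1 < q)
    (hq2 : q < 2) {z : G → ℝ} (hz : Summable z) (hz0 : ∀ g, 0 ≤ z g)
    (hkz : ∀ x y, k x y ^ (1 / (2 - q)) ≤ z (y⁻¹ * x)) {p : ℝ} (hqp : q ≤ p)
    {w : G → ℝ} (hw0 : ∀ x, 0 ≤ w x) (hw : Summable fun x => w x ^ 2) {A : ℝ}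
    (hA : ∑' x, w x ^ 2 ≤ A) :
    (Summable fun t : G × G => k t.1 t.2 * (w t.1 ^ p * w t.2 ^ p)) ∧
    ∑' t : G × G, k t.1 t.2 * (w t.1 ^ p * w t.2 ^ p) ≤
      (Real.sqrt A ^ (p - q)) ^ 2 * (2 * ((∑' g, z g) * A) + A * A) := by
  let h : G → ℝ := fun x => w x ^ 2
  have hh0 : ∀ x, 0 ≤ h x := fun x => by positivity
  let e1 : G × G ≃ G × G :=
    ⟨fun t => (t.2⁻¹ * t.1, t.1), fun t => (t.2, t.2 * t.1⁻¹), fun t => by simp, fun t => by simp⟩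
  let e2 : G × G ≃ G × G :=
    ⟨fun t => (t.2⁻¹ * t.1, t.2), fun t => (t.2 * t.1, t.2), fun t => by simp, fun t => by simp⟩
  have hzh : Summable fun t : G × G => z t.1 * h t.2 := hz.mul_of_nonneg hw hz0 hh0
  have hhh : Summable fun t : G × G => h t.1 * h t.2 := hw.mul_of_nonneg hw hh0 hh0
  have s1 : Summable fun t : G × G => z (t.2⁻¹ * t.1) * h t.1 := (e1.summable_iff).2 hzh
  have s2 : Summable fun t : G × G => z (t.2⁻¹ * t.1) * h t.2 := (e2.summable_iff).2 hzh
  have t0 := hz.tsum_mul_tsum hw hzh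
  have t3 := hw.tsum_mul_tsum hw hhh
  have t1 : ∑' t : G × G, z (t.2⁻¹ * t.1) * h t.1 = ∑' t : G × G, z t.1 * h t.2 :=
    e1.tsum_eq (fun t : G × G => z t.1 * h t.2)
  have t2 : ∑' t : G × G, z (t.2⁻¹ * t.1) * h t.2 = ∑' t : G × G, z t.1 * h t.2 :=
    e2.tsum_eq (fun t : G × G => z t.1 * h t.2)
  have hwM : ∀ x, w x ≤ Real.sqrt A := fun x =>
    Real.le_sqrt_of_sq_le ((hw.le_tsum x (fun y _ => hh0 y)).trans hA)
  set B := Real.sqrt A ^ (p - q) with hB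
  have hB0 : 0 ≤ B := by positivity
  have hpt : ∀ t : G × G, k t.1 t.2 * (w t.1 ^ p * w t.2 ^ p) ≤
      B ^ 2 * (z (t.2⁻¹ * t.1) * h t.1 + z (t.2⁻¹ * t.1) * h t.2 + h t.1 * h t.2) := by
    rintro ⟨x, y⟩
    simp only
    have hkn := hk x y
    have hx := hw0 x
    have hy := hw0 y
    calc k x y * (w x ^ p * w y ^ p)
        ≤ k x y * ((B * w x ^ q) * (B * w y ^ q)) := by
          gcongr
          · exact pow_le (by linarith) hqp (hw0 x) (hwM x)
          · exact pow_le (by linarith) hqp (hw0 y) (hwM y)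
      _ = B ^ 2 * (k x y * (w x ^ q * w y ^ q)) := by ring
      _ ≤ B ^ 2 * (k x y ^ (1 / (2 - q)) * w x ^ 2 + k x y ^ (1 / (2 - q)) * w y ^ 2
            + w x ^ 2 * w y ^ 2) := by
          gcongr
          exact three_term hq1 hq2 (hk x y) (hw0 x) (hw0 y)
      _ ≤ _ := by
          have := hkz x y
          simp only [h]
          gcongr
  have ssum := ((s1.add s2).add hhh).mul_left (B ^ 2)
  have hS : Summable fun t : G × G => k t.1 t.2 * (w t.1 ^ p * w t.2 ^ p) := by
    refine Summable.of_nonneg_of_le (fun t => ?_) hpt ssum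
    have := hk t.1 t.2; have := hw0 t.1; have := hw0 t.2
    positivity
  refine ⟨hS, (hS.tsum_le_tsum hpt ssum).trans ?_⟩
  rw [tsum_mul_left, (s1.add s2).tsum_add hhh, s1.tsum_add s2, t1, t2, ← t0, ← t3]
  have hZ : 0 ≤ ∑' g, z g := tsum_nonneg hz0
  have hH : 0 ≤ ∑' g, w g ^ 2 := tsum_nonneg hh0
  clear_value B
  generalize (∑' g, z g) = Z at *
  generalize (∑' g, w g ^ 2) = H at *
  have i1 : Z * H ≤ Z * A := mul_le_mul_of_nonneg_left hA hZ
  have i2 : H * H ≤ A * A := mul_le_mul hA hA hH (hH.trans hA)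
  exact mul_le_mul_of_nonneg_left (by linarith) (sq_nonneg B)

lemma shift_summable [Group G] {f : G → ℝ} (hf : Summable f) (s : G) :
    Summable fun x => f (x * s) := ((Equiv.mulRight s).summable_iff (f := f)).2 hf

lemma shift_summable' [Group G] {f : G → ℝ} (hf : Summable f) (x : G) :
    Summable fun y => f (y⁻¹ * x) :=
  (((Equiv.inv G).trans (Equiv.mulRight x)).summable_iff (f := f)).2 hf

/-- Single sum bound. -/
lemma single_bound [Group G] {k : G → G → ℝ} (hk : ∀ x y, 0 ≤ k x y) {q : ℝ} (hq1 : 1 < q)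
    (hq2 : q < 2) {z : G → ℝ} (hz : Summable z) (hz0 : ∀ g, 0 ≤ z g)
    (hkz : ∀ x y, k x y ^ (2 / (2 - q)) ≤ z (y⁻¹ * x)) {p : ℝ} (hqp : q ≤ p)
    (x : G) (M : ℝ) (hM : 0 ≤ M) (ε : ℝ) (hε : 0 < ε) :
    ∃ Y : G → ℝ, Summable Y ∧ (∀ y, 0 ≤ Y y) ∧ ∀ y t, 0 ≤ t → t ≤ M →
      k x y * t ^ p ≤ ε * t ^ 2 + Y y := by
  set B := M ^ (p - q) with hB
  have hB0 : 0 ≤ B := by positivity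
  obtain ⟨C, hC, hCb⟩ := two_term (ε := ε / (B + 1)) hq1 hq2 (by positivity)
  refine ⟨fun y => B * C * z (y⁻¹ * x), (shift_summable' hz x).mul_left _,
    fun y => by have := hz0 (y⁻¹ * x); positivity, fun y t ht htM => ?_⟩
  have hkn := hk x y
  calc k x y * t ^ p ≤ k x y * (B * t ^ q) := by
        gcongr; exact pow_le (by linarith) hqp ht htM
    _ = B * (k x y * t ^ q) := by ring
    _ ≤ B * (ε / (B + 1) * t ^ 2 + C * k x y ^ (2 / (2 - q))) := by
        gcongr; exact hCb _ _ hkn ht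
    _ = (B / (B + 1)) * (ε * t ^ 2) + B * C * k x y ^ (2 / (2 - q)) := by ring
    _ ≤ _ := by
        have := hkz x y
        refine add_le_add ?_ (mul_le_mul_of_nonneg_left this (by positivity))
        apply mul_le_of_le_one_left (by positivity)
        rw [div_le_one (by positivity)]; linarith

/-- All estimates packaged. -/
structure Good [Group G] [DecidableEq G] (R : G → G → ℝ) (p : ℝ) : Prop where
  nn : ∀ x y, 0 ≤ ker R x y
  single : ∀ (x : G) (M : ℝ), 0 ≤ M → ∀ ε : ℝ, 0 < ε →
    ∃ Y : G → ℝ, Summable Y ∧ (∀ y, 0 ≤ Y y) ∧ ∀ y t, 0 ≤ t → t ≤ M →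
      ker R x y * t ^ p ≤ ε * t ^ 2 + Y y
  double : ∀ A : ℝ, ∃ C : ℝ, ∀ w : G → ℝ, (∀ x, 0 ≤ w x) → (Summable fun x => w x ^ 2) →
    ∑' x, w x ^ 2 ≤ A →
    (Summable fun t : G × G => ker R t.1 t.2 * (w t.1 ^ p * w t.2 ^ p)) ∧
    ∑' t : G × G, ker R t.1 t.2 * (w t.1 ^ p * w t.2 ^ p) ≤ C

lemma good_of [Group G] [DecidableEq G] {S : Finset G} {N : ℕ} {α : ℝ} {R : G → G → ℝ}
    (hN : 2 ≤ N) (h : PolyGrowth S N) (hα0 : 0 < α) (hαN : α < (N : ℝ)) (hR : RieszKernel S N α R)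
    {p : ℝ} (hp : ((N : ℝ) + α) / (N : ℝ) < p) : Good R p ∧ 1 < p := by
  have hN0 : (0 : ℝ) < N := by positivity
  have h1 : 1 < ((N : ℝ) + α) / N := by rw [lt_div_iff₀ hN0]; linarith
  have h2 : ((N : ℝ) + α) / N < 2 := by rw [div_lt_iff₀ hN0]; linarith
  obtain ⟨q, hq, hq'⟩ := exists_between (lt_min hp h2)
  have hqp : q ≤ p := (hq'.trans_le (min_le_left _ _)).le
  have hq2 : q < 2 := hq'.trans_le (min_le_right _ _)
  have hq1 : 1 < q := h1.trans hq
  have h2q : 0 < 2 - q := by linarith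
  have hs1 : (N : ℝ) < (N - α) * (1 / (2 - q)) := by
    rw [mul_one_div, lt_div_iff₀ h2q]
    rw [div_lt_iff₀ hN0] at hq
    nlinarith
  have hs2 : (N : ℝ) < (N - α) * (2 / (2 - q)) := by
    have : (N - α) * (2 / (2 - q)) = 2 * ((N - α) * (1 / (2 - q))) := by ring
    rw [this]; linarith
  obtain ⟨z1, a1, b1, c1⟩ := ker_bound h hR _ (by positivity) hs1
  obtain ⟨z2, a2, b2, c2⟩ := ker_bound h hR _ (by positivity) hs2
  refine ⟨⟨ker_nonneg hR, ?_, ?_⟩, by linarith⟩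
  · intro x M hM ε hε
    exact single_bound (ker_nonneg hR) hq1 hq2 a2 b2 c2 hqp x M hM ε hε
  · intro A
    exact ⟨_, fun w hw0 hw hA => double_sum (ker_nonneg hR) hq1 hq2 a1 b1 c1 hqp hw0 hw hA⟩

lemma sq_bdd {u : G → ℝ} (hu : Summable fun x => u x ^ 2) {A : ℝ} (hA : ∑' x, u x ^ 2 ≤ A) (x : G) :
    |u x| ≤ Real.sqrt A :=
  Real.abs_le_sqrt ((hu.le_tsum x (fun y _ => sq_nonneg _)).trans hA)

lemma conv_summable [Group G] [DecidableEq G] {R : G → G → ℝ} {p : ℝ} (hg : Good R p) {u : G → ℝ}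
    (hu : Summable fun x => u x ^ 2) (x : G) : Summable fun y => ker R x y * |u y| ^ p := by
  obtain ⟨Y, hY, hY0, hb⟩ := hg.single x (Real.sqrt (∑' x, u x ^ 2)) (by positivity) 1 one_pos
  refine Summable.of_nonneg_of_le (fun y => ?_) (fun y => hb y _ (abs_nonneg _)
    (sq_bdd hu le_rfl y)) ?_
  · have := hg.nn x y; positivity
  · simpa using hu.add hY

lemma conv_nonneg [Group G] [DecidableEq G] {R : G → G → ℝ} {p : ℝ} (hg : Good R p) (u : G → ℝ)
    (x : G) : 0 ≤ conv R (fun y => |u y| ^ p) x := by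
  rw [conv_eq]
  exact tsum_nonneg fun y => mul_nonneg (hg.nn x y) (by positivity)

lemma conv_tendsto [Group G] [DecidableEq G] {R : G → G → ℝ} {p : ℝ} (hp : 1 < p) (hg : Good R p)
    {V : ℕ → G → ℝ} {u : G → ℝ} {A : ℝ} (hV : ∀ n, Summable fun x => V n x ^ 2)
    (hVA : ∀ n, ∑' x, V n x ^ 2 ≤ A) (hu : Summable fun x => u x ^ 2) (huA : ∑' x, u x ^ 2 ≤ A)
    (hlim : ∀ x, Tendsto (fun n => V n x) atTop (nhds (u x))) (x : G) :
    Tendsto (fun n => conv R (fun y => |V n y| ^ p) x) atTop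
      (nhds (conv R (fun y => |u y| ^ p) x)) := by
  have hA0 : 0 ≤ A := (tsum_nonneg fun y => sq_nonneg (u y)).trans huA
  simp only [conv_eq]
  rw [Metric.tendsto_atTop]
  intro ε hε
  obtain ⟨Y, hY, hY0, hb⟩ := hg.single x (Real.sqrt A) (by positivity) (ε / (4 * (A + 1)))
    (by positivity)
  have htail := tendsto_tsum_compl_atTop_zero Y
  obtain ⟨F, hF⟩ := ((Metric.tendsto_atTop.1 htail) (ε / 8) (by positivity))
  have hF := hF F le_rfl
  rw [Real.dist_eq, sub_zero] at hF
  have hF := (abs_lt.1 hF).2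
  have key : ∀ w : G → ℝ, (Summable fun x => w x ^ 2) → ∑' x, w x ^ 2 ≤ A →
      |∑' y, ker R x y * |w y| ^ p - ∑ y ∈ F, ker R x y * |w y| ^ p| ≤ ε * 3 / 8 := by
    intro w hw hwA
    have hs := conv_summable hg hw x
    have hdec := hs.sum_add_tsum_subtype_compl F
    rw [← hdec, add_sub_cancel_left]
    have hn : ∀ y, 0 ≤ ker R x y * |w y| ^ p := fun y => mul_nonneg (hg.nn x y) (by positivity)
    rw [abs_of_nonneg (tsum_nonneg fun y => hn _)]
    have hw' : Summable fun y : {y // y ∉ F} => w y ^ 2 := hw.subtype _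
    have hY' : Summable fun y : {y // y ∉ F} => Y y := hY.subtype _
    calc ∑' y : {y // y ∉ F}, ker R x y * |w y| ^ p
        ≤ ∑' y : {y // y ∉ F}, (ε / (4 * (A + 1)) * w y ^ 2 + Y y) := by
          refine Summable.tsum_le_tsum (fun y => ?_) (hs.subtype _) ((hw'.mul_left _).add hY')
          simpa using hb y _ (abs_nonneg _) (sq_bdd hw hwA y)
      _ = ε / (4 * (A + 1)) * ∑' y : {y // y ∉ F}, w y ^ 2 + ∑' y : {y // y ∉ F}, Y y := by
          rw [(hw'.mul_left _).tsum_add hY', tsum_mul_left]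
      _ ≤ ε / (4 * (A + 1)) * A + ε / 8 := by
          have : ∑' y : {y // y ∉ F}, w y ^ 2 ≤ ∑' y, w y ^ 2 :=
            hw.tsum_subtype_le _ {y | y ∉ F} (fun y => sq_nonneg _)
          have := this.trans hwA
          gcongr
      _ ≤ ε * 3 / 8 := by
          have : ε / (4 * (A + 1)) * A ≤ ε / 4 := by
            rw [div_mul_eq_mul_div, div_le_div_iff₀ (by positivity) (by positivity)]
            nlinarith
          linarith
  have hfin : Tendsto (fun n => ∑ y ∈ F, ker R x y * |V n y| ^ p) atTop
      (nhds (∑ y ∈ F, ker R x y * |u y| ^ p)) := by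
    refine tendsto_finsetSum _ fun y _ => ?_
    exact ((hlim y).abs.rpow_const (Or.inr (by linarith))).const_mul _
  obtain ⟨n0, hn0⟩ := (Metric.tendsto_atTop.1 hfin) (ε / 8) (by positivity)
  refine ⟨n0, fun n hn => ?_⟩
  have h1 := abs_le.1 (key _ (hV n) (hVA n))
  have h2 := abs_le.1 (key _ hu huA)
  have h3 := hn0 n hn
  rw [Real.dist_eq] at h3 ⊢
  have h3 := abs_lt.1 h3
  rw [abs_lt]
  constructor <;> linarith

lemma abs_phi (p t : ℝ) (hp : 1 < p) : |(|t| ^ (p - 2) * t)| = |t| ^ (p - 1) := by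
  rw [abs_mul, abs_of_nonneg (by positivity)]
  by_cases h : t = 0
  · subst h; simp [Real.zero_rpow (show p - 1 ≠ 0 by linarith)]
  · have : 0 < |t| := abs_pos.2 h
    nth_rewrite 2 [← Real.rpow_one |t|]
    rw [← Real.rpow_add this]; congr 1; ring

lemma phi_cont (p : ℝ) (hp : 1 < p) : Continuous fun t : ℝ => |t| ^ (p - 2) * t := by
  rw [continuous_iff_continuousAt]
  intro t
  by_cases h : t = 0
  · subst h
    unfold ContinuousAt
    simp only [mul_zero]
    rw [tendsto_zero_iff_abs_tendsto_zero]
    have : (abs ∘ fun t : ℝ => |t| ^ (p - 2) * t) = fun t => |t| ^ (p - 1) := by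
      ext t; exact abs_phi p t hp
    rw [this]
    have hc : Continuous fun t : ℝ => |t| ^ (p - 1) :=
      continuous_abs.rpow_const fun _ => Or.inr (by linarith)
    have := hc.tendsto 0
    simpa [Real.zero_rpow (show p - 1 ≠ 0 by linarith)] using this
  · exact (continuous_abs.continuousAt.rpow_const (Or.inl (abs_ne_zero.2 h))).mul continuousAt_id

lemma K_bound [Group G] [DecidableEq G] {R : G → G → ℝ} {p : ℝ} (hp : 1 < p) (hg : Good R p)
    (A : ℝ) : ∃ C : ℝ, ∀ u v : G → ℝ, (Summable fun x => u x ^ 2) → (Summable fun x => v x ^ 2) →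
    ∑' x, u x ^ 2 + ∑' x, v x ^ 2 ≤ A →
    (Summable fun x => conv R (fun y => |u y| ^ p) x * (|u x| ^ (p - 1) * |v x|)) ∧
    ∑' x, conv R (fun y => |u y| ^ p) x * (|u x| ^ (p - 1) * |v x|) ≤ C := by
  obtain ⟨C, hC⟩ := hg.double (2 * A)
  refine ⟨C, fun u v hu hv huv => ?_⟩
  let w : G → ℝ := fun x => |u x| + |v x|
  have hw0 : ∀ x, 0 ≤ w x := fun x => by positivity
  have hwle : ∀ x, w x ^ 2 ≤ 2 * (u x ^ 2 + v x ^ 2) := by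
    intro x
    have h1 := sq_abs (u x)
    have h2 := sq_abs (v x)
    simp only [w]
    nlinarith [sq_nonneg (|u x| - |v x|)]
  have hws : Summable fun x => w x ^ 2 :=
    Summable.of_nonneg_of_le (fun x => sq_nonneg _) hwle ((hu.add hv).mul_left 2)
  have hwA : ∑' x, w x ^ 2 ≤ 2 * A := by
    refine (hws.tsum_le_tsum hwle ((hu.add hv).mul_left 2)).trans ?_
    rw [tsum_mul_left, hu.tsum_add hv]; linarith
  obtain ⟨hs, hle⟩ := hC w hw0 hws hwA
  have hpt : ∀ x, conv R (fun y => |u y| ^ p) x * (|u x| ^ (p - 1) * |v x|) ≤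
      ∑' y, ker R x y * (w x ^ p * w y ^ p) := by
    intro x
    rw [conv_eq, ← tsum_mul_right]
    refine Summable.tsum_le_tsum (fun y => ?_) ((conv_summable hg hu x).mul_right _)
      (hs.prod_factor x)
    have hk := hg.nn x y
    have e : w x ^ p = w x ^ (p - 1) * w x := by
      nth_rewrite 3 [← Real.rpow_one (w x)]
      rw [← Real.rpow_add_of_nonneg (hw0 x) (by linarith) zero_le_one]; congr 1; ring
    have hx := hw0 x
    have hy := hw0 y
    have l1 : |u x| ≤ w x := by simp [w]
    have l2 : |v x| ≤ w x := by simp [w]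
    have l3 : |u y| ≤ w y := by simp [w]
    calc ker R x y * |u y| ^ p * (|u x| ^ (p - 1) * |v x|)
        ≤ ker R x y * w y ^ p * (w x ^ (p - 1) * w x) := by
          have : 0 ≤ p - 1 := by linarith
          have : 0 ≤ p := by linarith
          gcongr
      _ = _ := by rw [e]; ring
  have hS : Summable fun x => conv R (fun y => |u y| ^ p) x * (|u x| ^ (p - 1) * |v x|) :=
    Summable.of_nonneg_of_le (fun x => mul_nonneg (conv_nonneg hg u x) (by positivity)) hpt hs.prod
  refine ⟨hS, (hS.tsum_le_tsum hpt hs.prod).trans ?_⟩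
  rw [← hs.tsum_prod]
  exact hle

lemma eD_nonneg [Group G] (S : Finset G) {a : G → ℝ} (ha : ∀ x, 0 ≤ a x) {lam : ℝ} (hlam : 0 < lam)
    (u : G → ℝ) (x : G) : 0 ≤ eDensity S a lam u x := by
  have := ha x
  unfold eDensity grad
  have : 0 ≤ ∑ s ∈ S, (u (x * s) - u x) * (u (x * s) - u x) :=
    Finset.sum_nonneg fun s _ => mul_self_nonneg _
  positivity

lemma eD_parts [Group G] (S : Finset G) {a : G → ℝ} (ha : ∀ x, 0 ≤ a x) {lam : ℝ} (hlam : 0 < lam)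
    (u : G → ℝ) (x : G) : (lap S u x) ^ 2 ≤ eDensity S a lam u x ∧
      (1 + lam * a x) * u x ^ 2 ≤ eDensity S a lam u x ∧ u x ^ 2 ≤ eDensity S a lam u x := by
  have h1 := ha x
  have h2 : 0 ≤ grad S u u x := by
    unfold grad
    have : 0 ≤ ∑ s ∈ S, (u (x * s) - u x) * (u (x * s) - u x) :=
      Finset.sum_nonneg fun s _ => mul_self_nonneg _
    positivity
  have h3 : 0 ≤ (lap S u x) ^ 2 := sq_nonneg _
  have h4 : 0 ≤ lam * a x * u x ^ 2 := by positivity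
  have h5 : 0 ≤ u x ^ 2 := sq_nonneg _
  unfold eDensity
  refine ⟨by nlinarith, by nlinarith, by nlinarith⟩

lemma memE_sq [Group G] {S : Finset G} {a : G → ℝ} (ha : ∀ x, 0 ≤ a x) {lam : ℝ} (hlam : 0 < lam)
    {u : G → ℝ} (hu : MemE S a lam u) : (Summable fun x => u x ^ 2) ∧
      ∑' x, u x ^ 2 ≤ normEsq S a lam u := by
  have h : Summable fun x => u x ^ 2 :=
    Summable.of_nonneg_of_le (fun x => sq_nonneg _) (fun x => (eD_parts S ha hlam u x).2.2) hu
  exact ⟨h, h.tsum_le_tsum (fun x => (eD_parts S ha hlam u x).2.2) hu⟩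

/-- density of the inner product -/
def iDensity [Group G] (S : Finset G) (a : G → ℝ) (lam : ℝ) (u v : G → ℝ) (x : G) : ℝ :=
  lap S u x * lap S v x + grad S u v x + (1 + lam * a x) * (u x * v x)

lemma iD_le [Group G] (S : Finset G) {a : G → ℝ} (ha : ∀ x, 0 ≤ a x) {lam : ℝ} (hlam : 0 < lam)
    (u v : G → ℝ) (x : G) :
    |iDensity S a lam u v x| ≤ eDensity S a lam u x + eDensity S a lam v x := by
  have h1 : |lap S u x * lap S v x| ≤ lap S u x ^ 2 + lap S v x ^ 2 := by
    rw [abs_le]; constructor <;>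
    nlinarith [sq_nonneg (lap S u x - lap S v x), sq_nonneg (lap S u x + lap S v x),
      sq_nonneg (lap S u x), sq_nonneg (lap S v x)]
  have h2 : |grad S u v x| ≤ grad S u u x + grad S v v x := by
    unfold grad
    rw [← mul_add, ← Finset.sum_add_distrib, abs_mul, abs_of_pos (by norm_num : (0 : ℝ) < 1 / 2)]
    refine mul_le_mul_of_nonneg_left ?_ (by norm_num)
    refine (Finset.abs_sum_le_sum_abs _ _).trans (Finset.sum_le_sum fun s _ => ?_)
    generalize u (x * s) - u x = b
    generalize v (x * s) - v x = c
    rw [abs_le]; constructor <;>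
    nlinarith [sq_nonneg (b - c), sq_nonneg (b + c), sq_nonneg b, sq_nonneg c]
  have h3 : |(1 + lam * a x) * (u x * v x)| ≤ (1 + lam * a x) * (u x ^ 2 + v x ^ 2) := by
    have := ha x
    have h0 : 0 ≤ 1 + lam * a x := by positivity
    rw [abs_mul, abs_of_nonneg h0]
    refine mul_le_mul_of_nonneg_left ?_ h0
    rw [abs_le]; constructor <;>
    nlinarith [sq_nonneg (u x - v x), sq_nonneg (u x + v x), sq_nonneg (u x), sq_nonneg (v x)]
  unfold iDensity
  refine (abs_add_three _ _ _).trans ?_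
  unfold eDensity
  linarith

lemma inner_bound [Group G] (S : Finset G) {a : G → ℝ} (ha : ∀ x, 0 ≤ a x) {lam : ℝ}
    (hlam : 0 < lam) {u v : G → ℝ} (hu : MemE S a lam u) (hv : MemE S a lam v) :
    |innerE S a lam u v| ≤ normEsq S a lam u + normEsq S a lam v := by
  have := tsum_of_norm_bounded (f := iDensity S a lam u v) (Summable.hasSum (hu.add hv))
    (fun x => iD_le S ha hlam u v x)
  rw [Summable.tsum_add hu hv] at this
  exact this

lemma Kterm_bound [Group G] [DecidableEq G] {R : G → G → ℝ} {p : ℝ} (hp : 1 < p) (hg : Good R p)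
    (u v : G → ℝ) (x : G) : ‖conv R (fun y => |u y| ^ p) x * (|u x| ^ (p - 2) * u x * v x)‖ =
      conv R (fun y => |u y| ^ p) x * (|u x| ^ (p - 1) * |v x|) := by
  rw [Real.norm_eq_abs, abs_mul, abs_mul, abs_phi p _ hp, abs_of_nonneg (conv_nonneg hg u x)]

lemma Jd_smul [Group G] [DecidableEq G] (S : Finset G) (a : G → ℝ) (lam : ℝ) (R : G → G → ℝ) (p : ℝ)
    (u v : G → ℝ) (m : ℝ) : Jd S a lam R p u (fun x => m * v x) = m * Jd S a lam R p u v := by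
  unfold Jd innerE Kterm
  rw [mul_sub, ← tsum_mul_left, ← tsum_mul_left]
  congr 1
  · congr 1; ext x
    have h1 : lap S (fun x => m * v x) x = m * lap S v x := by
      unfold lap; rw [Finset.mul_sum]; exact Finset.sum_congr rfl fun s _ => by ring
    have h2 : grad S u (fun x => m * v x) x = m * grad S u v x := by
      unfold grad
      rw [mul_left_comm, Finset.mul_sum (a := m)]
      congr 1; exact Finset.sum_congr rfl fun s _ => by ring
    rw [h1, h2]; ring
  · congr 1; ext x; ring

lemma eD_smul [Group G] (S : Finset G) (a : G → ℝ) (lam : ℝ)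
    (v : G → ℝ) (m : ℝ) (x : G) :
    eDensity S a lam (fun x => m * v x) x = m ^ 2 * eDensity S a lam v x := by
  have h1 : lap S (fun x => m * v x) x = m * lap S v x := by
    unfold lap; rw [Finset.mul_sum]; exact Finset.sum_congr rfl fun s _ => by ring
  have h2 : grad S (fun x => m * v x) (fun x => m * v x) x = m ^ 2 * grad S v v x := by
    unfold grad
    rw [mul_left_comm, Finset.mul_sum (a := m ^ 2)]
    congr 1; exact Finset.sum_congr rfl fun s _ => by ring
  unfold eDensity
  rw [h1, h2]; ring

lemma Jd_le [Group G] [DecidableEq G] {S : Finset G} {a : G → ℝ} (ha : ∀ x, 0 ≤ a x) {lam : ℝ}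
    (hlam : 0 < lam) {R : G → G → ℝ} {p : ℝ} (hp : 1 < p) (hg : Good R p) {u v : G → ℝ}
    (hu : MemE S a lam u) (hv : MemE S a lam v) :
    |Jd S a lam R p u v| ≤ dualNorm S a lam R p u * (normE S a lam v + 1) := by
  set m := normE S a lam v + 1 with hm
  have hm0 : 0 < m := by have : 0 ≤ normE S a lam v := Real.sqrt_nonneg _; linarith
  obtain ⟨C, hC⟩ := K_bound hp hg (normEsq S a lam u + 1)
  have hbdd : BddAbove {t : ℝ | ∃ v, MemE S a lam v ∧ normEsq S a lam v ≤ 1 ∧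
      t = |Jd S a lam R p u v|} := by
    refine ⟨normEsq S a lam u + 1 + C, ?_⟩
    rintro t ⟨w, hw, hw1, rfl⟩
    have h1 := inner_bound S ha hlam hu hw
    obtain ⟨su, hsu⟩ := memE_sq ha hlam hu
    obtain ⟨sw, hsw⟩ := memE_sq ha hlam hw
    obtain ⟨hs, hle⟩ := hC u w su sw (by linarith)
    have h2 : |Kterm R p u w| ≤ C := by
      refine le_trans ?_ hle
      exact tsum_of_norm_bounded hs.hasSum (fun x => (Kterm_bound hp hg u w x).le)
    unfold Jd
    refine (abs_sub _ _).trans ?_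
    linarith
  have hsm : MemE S a lam (fun x => m⁻¹ * v x) := by
    unfold MemE
    have : eDensity S a lam (fun x => m⁻¹ * v x) = fun x => m⁻¹ ^ 2 * eDensity S a lam v x := by
      ext x; exact eD_smul _ _ _ _ _ _
    rw [this]; exact hv.mul_left _
  have hn0 : 0 ≤ normEsq S a lam v := tsum_nonneg (eD_nonneg S ha hlam v)
  have hnm : normEsq S a lam (fun x => m⁻¹ * v x) ≤ 1 := by
    have : normEsq S a lam (fun x => m⁻¹ * v x) = m⁻¹ ^ 2 * normEsq S a lam v := by
      unfold normEsq
      rw [← tsum_mul_left]; congr 1; ext x; exact eD_smul _ _ _ _ _ _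
    rw [this, inv_pow, inv_mul_le_iff₀ (by positivity), mul_one]
    have h1 : normE S a lam v ^ 2 = normEsq S a lam v := Real.sq_sqrt hn0
    have h2 : 0 ≤ normE S a lam v := Real.sqrt_nonneg _
    rw [← h1]; gcongr; linarith
  have := le_csSup hbdd ⟨_, hsm, hnm, rfl⟩
  rw [Jd_smul, abs_mul, abs_of_pos (inv_pos.2 hm0), inv_mul_le_iff₀ hm0, mul_comm] at this
  exact this

lemma Jd_self [Group G] [DecidableEq G] (S : Finset G) (a : G → ℝ) (lam : ℝ) (R : G → G → ℝ) {p : ℝ}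
    (hp : 1 < p) (u : G → ℝ) : Jd S a lam R p u u = normEsq S a lam u - Dterm R p u := by
  unfold Jd innerE normEsq Kterm Dterm
  congr 1
  · congr 1; ext x; unfold eDensity; ring
  · congr 1; ext x; congr 1
    by_cases h : u x = 0
    · simp [h, Real.zero_rpow (show p ≠ 0 by linarith)]
    · have h0 : 0 < |u x| := abs_pos.2 h
      have : u x * u x = |u x| ^ (2 : ℝ) := by
        rw [Real.rpow_ofNat, sq_abs]; ring
      rw [mul_assoc, this, ← Real.rpow_add h0]; congr 1; ring

lemma PS_bounded [Group G] [DecidableEq G] {S : Finset G} {a : G → ℝ} (ha : ∀ x, 0 ≤ a x) {lam : ℝ}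
    (hlam : 0 < lam) {R : G → G → ℝ} {p : ℝ} (hp : 1 < p) (hg : Good R p) {c : ℝ} {U : ℕ → G → ℝ}
    (hU : PSseq S a lam R p c U) : ∃ A : ℝ, ∀ n, normEsq S a lam (U n) ≤ A := by
  obtain ⟨hE, hJ, hd⟩ := hU
  obtain ⟨C, hC⟩ := hJ.bddAbove_range
  obtain ⟨D, hD⟩ := hd.bddAbove_range
  refine ⟨(((|D| + 2 * p * |C|) / (p - 1)) + 1 + |D|/ (p-1)) ^ 2, fun n => ?_⟩
  have h1 : Jfun S a lam R p (U n) ≤ C := hC ⟨n, rfl⟩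
  have h2 : dualNorm S a lam R p (U n) ≤ D := hD ⟨n, rfl⟩
  have h3 := Jd_le ha hlam hp hg (hE n) (hE n)
  have hn0 : 0 ≤ normEsq S a lam (U n) := tsum_nonneg (eD_nonneg S ha hlam _)
  have h4 : normE S a lam (U n) ^ 2 = normEsq S a lam (U n) := Real.sq_sqrt hn0
  have h5 : 0 ≤ normE S a lam (U n) := Real.sqrt_nonneg _
  rw [Jd_self S a lam R hp] at h3
  unfold Jfun at h1
  rw [← h4] at h1 h3 ⊢
  set t := normE S a lam (U n)
  set T := Dterm R p (U n)
  have h6 : dualNorm S a lam R p (U n) * (t + 1) ≤ |D| * (t + 1) := by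
    gcongr; exact h2.trans (le_abs_self D)
  have h7 := (abs_le.1 h3).1
  have h8 : p * t ^ 2 - T ≤ 2 * p * |C| := by
    have := h1.trans (le_abs_self C)
    have h9 := mul_le_mul_of_nonneg_left this (show 0 ≤ 2 * p by linarith)
    have e : 2 * p * (1 / 2 * t ^ 2 - 1 / (2 * p) * T) = p * t ^ 2 - T := by
      have : p ≠ 0 := by linarith
      field_simp
    rw [e] at h9; exact h9
  have h10 : (p - 1) * t ^ 2 ≤ |D| * (t + 1) + 2 * p * |C| := by
    have h11 := (abs_le.1 h3).2
    nlinarith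
  have hp1 : 0 < p - 1 := by linarith
  have hDn := abs_nonneg D
  have hCn := abs_nonneg C
  gcongr
  set X := (|D| + 2 * p * |C|) / (p - 1) with hX
  set Y := |D| / (p - 1) with hY
  have hX0 : 0 ≤ X := by positivity
  have hY0 : 0 ≤ Y := by positivity
  have h12 : t ^ 2 ≤ X + Y * t := by
    have : X + Y * t = (|D| * (t + 1) + 2 * p * |C|) / (p - 1) := by rw [hX, hY]; ring
    rw [this, le_div_iff₀ hp1]; linarith
  by_contra hcon
  push Not at hcon
  nlinarith


/-- truncation to a finite set -/
def trunc [DecidableEq G] (F : Finset G) (v : G → ℝ) (x : G) : ℝ := if x ∈ F then v x else 0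

/-- finite neighbourhood -/
def nbhd [Group G] [DecidableEq G] (S F : Finset G) : Finset G :=
  F ∪ (F ×ˢ S).image fun t => t.1 * t.2⁻¹

lemma trunc_zero [Group G] [DecidableEq G] {S F : Finset G} (v : G → ℝ) {x : G}
    (hx : x ∉ nbhd S F) : trunc F v x = 0 ∧ ∀ s ∈ S, trunc F v (x * s) = 0 := by
  simp only [nbhd, Finset.mem_union, Finset.mem_image, Finset.mem_product, not_or] at hx
  refine ⟨by simp [trunc, hx.1], fun s hs => ?_⟩
  have : x * s ∉ F := fun h => hx.2 ⟨(x * s, s), ⟨h, hs⟩, by simp⟩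
  simp [trunc, this]

lemma iD_trunc_zero [Group G] [DecidableEq G] {S F : Finset G} (a : G → ℝ) (lam : ℝ) (u v : G → ℝ)
    {x : G} (hx : x ∉ nbhd S F) : iDensity S a lam u (trunc F v) x = 0 := by
  obtain ⟨h1, h2⟩ := trunc_zero v hx
  have h3 : lap S (trunc F v) x = 0 := Finset.sum_eq_zero fun s hs => by rw [h1, h2 s hs]; simp
  have h4 : grad S u (trunc F v) x = 0 := by
    unfold grad
    rw [Finset.sum_eq_zero fun s hs => by rw [h1, h2 s hs]; simp]; simp
  simp [iDensity, h1, h3, h4]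

lemma memE_trunc [Group G] [DecidableEq G] (S F : Finset G) (a : G → ℝ) (lam : ℝ) (v : G → ℝ) :
    MemE S a lam (trunc F v) := by
  refine summable_of_ne_finset_zero (s := nbhd S F) fun x hx => ?_
  have := iD_trunc_zero a lam (trunc F v) v hx
  rw [← this]; unfold eDensity iDensity; ring

lemma Jd_trunc_tendsto [Group G] [DecidableEq G] {R : G → G → ℝ} {p : ℝ} (hp : 1 < p)
    (S F : Finset G) (a : G → ℝ) (lam : ℝ)
    {V : ℕ → G → ℝ} {u : G → ℝ}
    (hlim : ∀ x, Tendsto (fun n => V n x) atTop (nhds (u x)))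
    (hconv : ∀ x, Tendsto (fun n => conv R (fun y => |V n y| ^ p) x) atTop
      (nhds (conv R (fun y => |u y| ^ p) x))) (v : G → ℝ) :
    Tendsto (fun n => Jd S a lam R p (V n) (trunc F v)) atTop
      (nhds (Jd S a lam R p u (trunc F v))) := by
  have hI : ∀ w : G → ℝ, innerE S a lam w (trunc F v)
      = ∑ x ∈ nbhd S F, iDensity S a lam w (trunc F v) x := fun w =>
    tsum_eq_sum fun x hx => iD_trunc_zero a lam w v hx
  have hK : ∀ w : G → ℝ, Kterm R p w (trunc F v)
      = ∑ x ∈ F, conv R (fun y => |w y| ^ p) x * (|w x| ^ (p - 2) * w x * trunc F v x) := fun w =>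
    tsum_eq_sum fun x hx => by simp [trunc, hx]
  unfold Jd
  simp only [hI, hK]
  refine Tendsto.sub (tendsto_finsetSum _ fun x _ => ?_) (tendsto_finsetSum _ fun x _ => ?_)
  · unfold iDensity lap grad
    refine Tendsto.add (Tendsto.add ?_ ?_) ?_
    · exact (tendsto_finsetSum _ fun s _ => (hlim _).sub (hlim _)).mul_const _
    · exact (tendsto_finsetSum _ fun s _ => ((hlim _).sub (hlim _)).mul_const _).const_mul _
    · exact ((hlim x).mul_const _).const_mul _
  · exact (hconv x).mul ((((phi_cont p hp).tendsto _).comp (hlim x)).mul_const _)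

lemma trunc_abs [DecidableEq G] (F : Finset G) (v : G → ℝ) (x : G) : |trunc F v x| ≤ |v x| := by
  unfold trunc; split_ifs <;> simp

lemma trunc_tendsto [DecidableEq G] (v : G → ℝ) (x : G) :
    Tendsto (fun F => trunc F v x) atTop (nhds (v x)) := by
  refine tendsto_const_nhds.congr' ?_
  filter_upwards [eventually_ge_atTop {x}] with F hF
  have : x ∈ F := hF (by simp)
  simp [trunc, this]

lemma mul_summable {f g : G → ℝ} (hf : Summable fun x => f x ^ 2) (hg : Summable fun x => g x ^ 2) :
    Summable fun x => |f x| * |g x| := by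
  refine Summable.of_nonneg_of_le (fun x => by positivity) (fun x => ?_) (hf.add hg)
  nlinarith [sq_nonneg (|f x| - |g x|), sq_abs (f x), sq_abs (g x), sq_nonneg (f x),
    sq_nonneg (g x)]

lemma Jd_dense [Group G] [DecidableEq G] {S : Finset G} {a : G → ℝ} (ha : ∀ x, 0 ≤ a x) {lam : ℝ}
    (hlam : 0 < lam) {R : G → G → ℝ} {p : ℝ} (hp : 1 < p) (hg : Good R p) {u v : G → ℝ}
    (hu : MemE S a lam u) (hv : MemE S a lam v) :
    Tendsto (fun F => Jd S a lam R p u (trunc F v)) atTop (nhds (Jd S a lam R p u v)) := by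
  obtain ⟨su, -⟩ := memE_sq ha hlam hu
  obtain ⟨sv, -⟩ := memE_sq ha hlam hv
  have hT := trunc_tendsto v
  have slap : Summable fun x => lap S u x ^ 2 :=
    Summable.of_nonneg_of_le (fun x => sq_nonneg _) (fun x => (eD_parts S ha hlam u x).1) hu
  have sus : ∀ s : G, Summable fun x => u (x * s) ^ 2 := fun s => shift_summable su s
  have svs : ∀ s : G, Summable fun x => v (x * s) ^ 2 := fun s => shift_summable sv s
  have sdu : ∀ s : G, Summable fun x => (u (x * s) - u x) ^ 2 := fun s => by
    refine Summable.of_nonneg_of_le (fun x => sq_nonneg _) (fun x => ?_)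
      (((sus s).add su).mul_left 2)
    nlinarith [sq_nonneg (u (x * s) + u x)]
  unfold Jd
  refine Tendsto.sub ?_ ?_
  · let bound : G → ℝ := fun x => ∑ s ∈ S, (|lap S u x| * |v (x * s)| + |lap S u x| * |v x|)
      + ∑ s ∈ S, (|u (x * s) - u x| * |v (x * s)| + |u (x * s) - u x| * |v x|)
      + (eDensity S a lam u x + eDensity S a lam v x)
    have hb : Summable bound := by
      refine Summable.add (Summable.add ?_ ?_) (hu.add hv)
      · exact summable_sum fun s _ => (mul_summable slap (svs s)).add (mul_summable slap sv)
      · exact summable_sum fun s _ =>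
          (mul_summable (sdu s) (svs s)).add (mul_summable (sdu s) sv)
    refine tendsto_tsum_of_dominated_convergence hb (fun x => ?_) (Eventually.of_forall fun F x => ?_)
    · unfold lap grad
      refine Tendsto.add (Tendsto.add ?_ ?_) ?_
      · exact (tendsto_finsetSum _ fun s _ => (hT _).sub (hT _)).const_mul _
      · exact (tendsto_finsetSum _ fun s _ => ((hT _).sub (hT _)).const_mul _).const_mul _
      · exact ((hT x).const_mul _).const_mul _
    · have hd : ∀ s, |trunc F v (x * s) - trunc F v x| ≤ |v (x * s)| + |v x| := fun s =>
        (abs_sub _ _).trans (add_le_add (trunc_abs F v _) (trunc_abs F v _))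
      rw [Real.norm_eq_abs]
      refine (abs_add_three _ _ _).trans (add_le_add (add_le_add ?_ ?_) ?_)
      · rw [abs_mul]
        calc |lap S u x| * |lap S (trunc F v) x|
            ≤ |lap S u x| * ∑ s ∈ S, (|v (x * s)| + |v x|) := by
              refine mul_le_mul_of_nonneg_left ?_ (abs_nonneg _)
              exact (Finset.abs_sum_le_sum_abs _ _).trans (Finset.sum_le_sum fun s _ => hd s)
          _ = _ := by
              rw [Finset.mul_sum]; exact Finset.sum_congr rfl fun s _ => by ring
      · unfold grad
        rw [abs_mul, abs_of_pos (by norm_num : (0 : ℝ) < 1 / 2)]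
        have h1 : |∑ s ∈ S, (u (x * s) - u x) * (trunc F v (x * s) - trunc F v x)| ≤
            ∑ s ∈ S, (|u (x * s) - u x| * |v (x * s)| + |u (x * s) - u x| * |v x|) := by
          refine (Finset.abs_sum_le_sum_abs _ _).trans (Finset.sum_le_sum fun s _ => ?_)
          rw [abs_mul, ← mul_add]
          exact mul_le_mul_of_nonneg_left (hd s) (abs_nonneg _)
        have h0 := abs_nonneg (∑ s ∈ S, (u (x * s) - u x) * (trunc F v (x * s) - trunc F v x))
        linarith
      · have h0 : 0 ≤ 1 + lam * a x := by have := ha x; positivity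
        have h1 := (eD_parts S ha hlam u x).2.1
        have h2 := (eD_parts S ha hlam v x).2.1
        rw [abs_mul, abs_of_nonneg h0, abs_mul]
        have h3 : |u x| * |trunc F v x| ≤ u x ^ 2 + v x ^ 2 := by
          have := mul_le_mul_of_nonneg_left (trunc_abs F v x) (abs_nonneg (u x))
          nlinarith [sq_nonneg (|u x| - |v x|), sq_abs (u x), sq_abs (v x), sq_nonneg (u x),
            sq_nonneg (v x)]
        have := mul_le_mul_of_nonneg_left h3 h0
        linarith
  · obtain ⟨C, hC⟩ := K_bound hp hg (∑' x, u x ^ 2 + ∑' x, v x ^ 2)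
    refine tendsto_tsum_of_dominated_convergence (hC u v su sv le_rfl).1 (fun x => ?_)
      (Eventually.of_forall fun F x => ?_)
    · exact ((hT x).const_mul _).const_mul _
    · rw [Kterm_bound hp hg]
      have := conv_nonneg hg u x
      have h2 := trunc_abs F v x
      gcongr

end helpers

theorem PS_weak_limit_critical
    {G : Type*} [Group G] [Countable G] [DecidableEq G]
    (S : Finset G) (hSsymm : ∀ s ∈ S, s⁻¹ ∈ S)
    (hSgen : Subgroup.closure (S : Set G) = ⊤)
    (N : ℕ) (hN : 2 ≤ N) (hgrowth : PolyGrowth S N)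
    (α : ℝ) (hα0 : 0 < α) (hαN : α < (N : ℝ))
    (R : G → G → ℝ) (hR : RieszKernel S N α R)
    (p : ℝ) (hp : ((N : ℝ) + α) / (N : ℝ) < p)
    (a : G → ℝ) (ha : ∀ x, 0 ≤ a x)
    (lam : ℝ) (hlam : 0 < lam)
    (c : ℝ) (U : ℕ → G → ℝ) (hU : PSseq S a lam R p c U) :
    ∃ φ : ℕ → ℕ, StrictMono φ ∧ ∃ u : G → ℝ, MemE S a lam u ∧
      (∀ x, Tendsto (fun n => U (φ n) x) atTop (nhds (u x))) ∧
      ∀ v : G → ℝ, MemE S a lam v → Jd S a lam R p u v = 0 := by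
  obtain ⟨hg, hp1⟩ := good_of hN hgrowth hα0 hαN hR hp
  obtain ⟨A, hA⟩ := PS_bounded ha hlam hp1 hg hU
  obtain ⟨hE, -, hd⟩ := hU
  have hsq := fun n => memE_sq ha hlam (hE n)
  have hcpt : IsCompact (Set.univ.pi fun _ : G => Set.Icc (-Real.sqrt A) (Real.sqrt A)) :=
    isCompact_univ_pi fun _ => isCompact_Icc
  obtain ⟨u, -, φ, hφ, hlim⟩ := hcpt.tendsto_subseq (x := U) fun n x _ =>
    abs_le.1 (sq_bdd (hsq n).1 ((hsq n).2.trans (hA n)) x)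
  rw [tendsto_pi_nhds] at hlim
  have hlim : ∀ x, Tendsto (fun n => U (φ n) x) atTop (nhds (u x)) := hlim
  have hpart : ∀ F : Finset G, ∑ x ∈ F, eDensity S a lam u x ≤ A := by
    intro F
    have ht : Tendsto (fun n => ∑ x ∈ F, eDensity S a lam (U (φ n)) x) atTop
        (nhds (∑ x ∈ F, eDensity S a lam u x)) := by
      refine tendsto_finsetSum _ fun x _ => ?_
      unfold eDensity lap grad
      refine Tendsto.add (Tendsto.add ?_ ?_) ?_
      · exact (tendsto_finsetSum _ fun s _ => (hlim _).sub (hlim _)).pow 2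
      · exact (tendsto_finsetSum _ fun s _ =>
          ((hlim _).sub (hlim _)).mul ((hlim _).sub (hlim _))).const_mul _
      · exact ((hlim x).pow 2).const_mul _
    refine le_of_tendsto' ht fun n => ?_
    exact ((hE (φ n)).sum_le_tsum F fun x _ => eD_nonneg S ha hlam _ x).trans (hA (φ n))
  have huE : MemE S a lam u := summable_of_sum_le (eD_nonneg S ha hlam u) hpart
  have huA : normEsq S a lam u ≤ A := huE.tsum_le_of_sum_le hpart
  obtain ⟨su, hsu⟩ := memE_sq ha hlam huE
  have hconv := conv_tendsto hp1 hg (fun n => (hsq (φ n)).1)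
    (fun n => (hsq (φ n)).2.trans (hA (φ n))) su (hsu.trans huA) hlim
  refine ⟨φ, hφ, u, huE, hlim, fun v hv => ?_⟩
  have h0 : ∀ F : Finset G, Jd S a lam R p u (trunc F v) = 0 := by
    intro F
    have h1 := Jd_trunc_tendsto hp1 S F a lam hlim hconv v
    have h2 : Tendsto (fun n => Jd S a lam R p (U (φ n)) (trunc F v)) atTop (nhds 0) := by
      refine squeeze_zero_norm
        (fun n => Jd_le ha hlam hp1 hg (hE (φ n)) (memE_trunc S F a lam v)) ?_
      simpa using (hd.comp hφ.tendsto_atTop).mul_const (normE S a lam (trunc F v) + 1)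
    exact tendsto_nhds_unique h1 h2
  have h3 := Jd_dense ha hlam hp1 hg huE hv
  simp only [h0] at h3
  exact (tendsto_nhds_unique h3 tendsto_const_nhds)

end Choquard
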